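/- The major-index generating polynomial D_n(q) for derangements satisfies: D_0(q) = 1 and for n ≥ 1, (q;q)_n / (1-q)^n = sum over k from 0 to n of the q-binomial coefficient (n choose k)_q times D_k(q). -/

import Mathlib

open Finset

attribute [local instance] Classical.propDecidable

noncomputable section

/-- The word `x_1 x_2 ... x_n` (0-indexed) of a signed permutation of order `n`,
encoded as a pair (permutation, signs): `x_i = ±(σ(i)+1)`. -/
def sword (n : ℕ) (w : Equiv.Perm (Fin n) × (Fin n → Bool)) : ℕ → ℤ :=
  fun i => if h : i < n then
      (if w.2 ⟨i, h⟩ then -(((w.1 ⟨i, h⟩ : ℕ) : ℤ) + 1) else (((w.1 ⟨i, h⟩ : ℕ) : ℤ) + 1))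
    else 0

/-- number of negative letters -/
def negStat (n : ℕ) (x : ℕ → ℤ) : ℕ := ((Finset.range n).filter (fun i => x i < 0)).card

/-- number of positive fixed points (`x_i = i`, 1-indexed) -/
def fixPlus (n : ℕ) (x : ℕ → ℤ) : ℕ :=
  ((Finset.range n).filter (fun i => x i = (i : ℤ) + 1)).card

/-- number of negative fixed points (`x_i = -i`, 1-indexed) -/
def fixMinus (n : ℕ) (x : ℕ → ℤ) : ℕ :=
  ((Finset.range n).filter (fun i => x i = -((i : ℤ) + 1))).card

/-- major index of the word -/
def majStat (n : ℕ) (x : ℕ → ℤ) : ℕ :=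
  ∑ i ∈ Finset.range (n - 1), if x (i + 1) < x i then i + 1 else 0

/-- number of inversions of the word -/
def invStat (n : ℕ) (x : ℕ → ℤ) : ℕ :=
  ((Finset.range n ×ˢ Finset.range n).filter (fun p => p.1 < p.2 ∧ x p.2 < x p.1)).card

/-- length function `ℓ(w) = inv w + ∑_{x_i<0} |x_i|` -/
def lenStat (n : ℕ) (x : ℕ → ℤ) : ℕ :=
  invStat n x + ∑ i ∈ Finset.range n, if x i < 0 then (x i).natAbs else 0

/-- flag-major index `fmaj = 2 maj + neg` -/
def fmajStat (n : ℕ) (x : ℕ → ℤ) : ℕ := 2 * majStat n x + negStat n x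

/-- the word `x_0 ... x_{m-1}` has its leftmost trough at position `2k` (1-indexed):
`x_1 > x_2 > ... > x_{2k}` and `x_{2k} < x_{2k+1}` (with `x_{m+1} = ∞`). -/
def IsDesarAt (m k : ℕ) (x : ℕ → ℤ) : Prop :=
  1 ≤ k ∧ 2 * k ≤ m ∧ (∀ i, i + 1 < 2 * k → x (i + 1) < x i) ∧
    (2 * k = m ∨ x (2 * k - 1) < x (2 * k))

/-- a word of length `m` is a desarrangement (empty word included) -/
def IsDesar (m : ℕ) (x : ℕ → ℤ) : Prop :=
  m = 0 ∨ ∃ k, IsDesarAt m k x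

/-- the length of the longest right factor of the word of length `n`
which is a desarrangement -/
def dlen (n : ℕ) (x : ℕ → ℤ) : ℕ :=
  sSup {m | m ≤ n ∧ IsDesar m (fun i => x (n - m + i))}

/-- number of letters of `w^-` in the pixed factorization `w = w^- w^+ w^d` -/
def pixMinus (n : ℕ) (x : ℕ → ℤ) : ℕ :=
  ((Finset.range (n - dlen n x)).filter (fun i => x i < 0)).card

/-- number of letters of `w^+` in the pixed factorization `w = w^- w^+ w^d` -/
def pixPlus (n : ℕ) (x : ℕ → ℤ) : ℕ :=
  ((Finset.range (n - dlen n x)).filter (fun i => 0 < x i)).card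

/-- the number of derangements of an `m`-element set -/
def dnum (m : ℕ) : ℕ :=
  (Finset.univ.filter (fun σ : Equiv.Perm (Fin m) => ∀ i, σ i ≠ i)).card

/-- the word of an ordinary permutation of `{1, ..., m}` -/
def pword (m : ℕ) (σ : Equiv.Perm (Fin m)) : ℕ → ℤ :=
  fun i => if h : i < m then ((σ ⟨i, h⟩ : ℕ) : ℤ) + 1 else 0

/-- the q-ascending factorial `(q;q)_m` -/
def qq {K : Type*} [CommRing K] (q : K) (m : ℕ) : K :=
  ∏ i ∈ Finset.range m, (1 - q ^ (i + 1))

/-- `D_m(q)`: generating polynomial for derangements of order `m` by major index -/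
def Dmaj {K : Type*} [CommRing K] (q : K) (m : ℕ) : K :=
  ∑ σ ∈ Finset.univ.filter (fun σ : Equiv.Perm (Fin m) => ∀ i, σ i ≠ i),
    q ^ majStat m (pword m σ)

/-!
Label the positions of a permutation `σ` of `{1, …, n}` by natural numbers that weakly decrease, and
require `σ` to increase along every block of equal labels. Subtracting the least such labelling,
whose sum is `maj σ`, leaves an arbitrary partition with at most `n` parts, so the labellings of `σ`
have generating function `q ^ maj σ / (q;q)_n`. On the other hand, sorting a word stably by
decreasing letter makes the labelled permutations correspond to all words of length `n`, whose
generating function is `(1 - q)⁻ⁿ`.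

Inside a block of equal labels the drops (`σ x < x`) precede the fixed points, and these precede
the excedances (`x < σ x`): otherwise `σ` would be a strictly increasing self-map of an interval,
hence the identity there. The fixed points of a labelled permutation can therefore be removed, and
reinserted in exactly one way: a labelled permutation moving `k` points is the same as a labelled
derangement of `k` points together with the partition formed by the `n - k` labels of the fixed
points. Hence `(1 - q)⁻ⁿ = ∑ k, D_k(q) / ((q;q)_k (q;q)_{n-k})` in `[0, ∞]` for `0 ≤ q < 1`;
multiplied by `(q;q)_n` this is an identity of integer polynomials, so it holds in every
commutative ring.
-/

section Compatible

variable {α δ ω : Type*}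

/-- The pair `(w, a)` is compatible: the labels `a` weakly decrease, and the word `w` strictly
increases along each block of equal labels. For a permutation `w` these labels are the
`P`-partitions whose generating function is governed by the major index of `w`. -/
structure IsCompatible [Preorder α] [Preorder ω] [Preorder δ] (w : α → ω) (a : α → δ) : Prop where
  antitone : Antitone a
  lt_of_eq : ∀ ⦃x y⦄, x < y → a x = a y → w x < w y

/-- The sign of `σ x - x`: negative at a drop, zero at a fixed point, positive at an excedance. -/
def moveSign [LinearOrder α] (σ : α → α) (x : α) : SignType :=
  if σ x < x then -1 else if σ x = x then 0 else 1

section MoveSign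

variable [LinearOrder α] {σ : α → α} {x : α}

lemma moveSign_eq_zero_iff : moveSign σ x = 0 ↔ σ x = x := by
  unfold moveSign
  split_ifs with hlt heq
  · simp [hlt.ne]
  · simp [heq]
  · simp [heq]

lemma moveSign_nonpos_iff : moveSign σ x ≤ 0 ↔ σ x ≤ x := by
  unfold moveSign
  split_ifs with hlt heq
  · simp [hlt.le]
  · simp [heq]
  · simp [(not_lt.1 hlt).lt_of_ne (Ne.symm heq)]

lemma moveSign_nonneg_iff : 0 ≤ moveSign σ x ↔ x ≤ σ x := by
  unfold moveSign
  split_ifs with hlt heq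
  · simp [hlt]
  · simp [heq]
  · simp [not_lt.1 hlt]

end MoveSign

lemma IsCompatible.eqOn_id_Icc [LinearOrder α] [Finite α] [PartialOrder δ] {σ : α → α} {a : α → δ}
    (h : IsCompatible σ a) {x y : α} (ha : a x = a y) (hx : x ≤ σ x) (hy : σ y ≤ y) :
    Set.EqOn σ id (Set.Icc x y) := by
  have hconst : ∀ z ∈ Set.Icc x y, a z = a x := fun z hz =>
    (h.antitone hz.1).antisymm (ha.trans_le (h.antitone hz.2))
  have hmono : StrictMonoOn σ (Set.Icc x y) := fun u hu v hv huv =>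
    h.lt_of_eq huv ((hconst u hu).trans (hconst v hv).symm)
  have hmaps : Set.MapsTo σ (Set.Icc x y) (Set.Icc x y) := fun z hz =>
    have hxy := hz.1.trans hz.2
    ⟨hx.trans (hmono.monotoneOn (Set.left_mem_Icc.2 hxy) hz hz.1),
      (hmono.monotoneOn hz (Set.right_mem_Icc.2 hxy) hz.2).trans hy⟩
  have hrestrict : StrictMono (hmaps.restrict σ _ _) := fun u v huv => hmono u.2 v.2 huv
  exact fun z hz => congrArg Subtype.val
    ((hrestrict.apply_le (x := ⟨z, hz⟩)).antisymm hrestrict.le_apply)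

lemma IsCompatible.moveSign_le [LinearOrder α] [Finite α] [PartialOrder δ] {σ : α → α} {a : α → δ}
    (h : IsCompatible σ a) {x y : α} (hxy : x < y) (ha : a x = a y) :
    moveSign σ x ≤ moveSign σ y := by
  rcases lt_or_ge (moveSign σ x) 0 with hx | hx
  · exact (SignType.neg_iff.1 hx).trans_le (SignType.neg_one_le _)
  rcases lt_or_ge 0 (moveSign σ y) with hy | hy
  · exact (SignType.le_one _).trans_eq (SignType.pos_iff.1 hy).symm
  have hfix := h.eqOn_id_Icc ha (moveSign_nonneg_iff.1 hx) (moveSign_nonpos_iff.1 hy)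
  rw [moveSign_eq_zero_iff.2 (hfix (Set.left_mem_Icc.2 hxy.le)),
    moveSign_eq_zero_iff.2 (hfix (Set.right_mem_Icc.2 hxy.le))]

end Compatible

section Shuffle

variable {α β γ δ : Type*} {e e' : α ⊕ β ≃ γ} {τ : Equiv.Perm α} {b b' : α → δ} {μ μ' : β → δ}

/-- The permutation of `γ` acting as `τ` on the image of `α` under `e` and fixing the image
of `β`. -/
def shufflePerm (e : α ⊕ β ≃ γ) (τ : Equiv.Perm α) : Equiv.Perm γ :=
  e.permCongr (Equiv.Perm.sumCongr τ 1)

/-- The labelling of `γ` given by `b` on the image of `α` under `e` and by `μ` on that of `β`. -/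
def shuffleLabel (e : α ⊕ β ≃ γ) (b : α → δ) (μ : β → δ) : γ → δ :=
  Sum.elim b μ ∘ e.symm

@[simp]
lemma shufflePerm_inl (x : α) : shufflePerm e τ (e (Sum.inl x)) = e (Sum.inl (τ x)) := by
  simp [shufflePerm]

@[simp]
lemma shufflePerm_inr (y : β) : shufflePerm e τ (e (Sum.inr y)) = e (Sum.inr y) := by
  simp [shufflePerm]

lemma shufflePerm_injective : Function.Injective (shufflePerm e) := fun _ _ h =>
  congrArg Prod.fst (Equiv.Perm.sumCongrHom_injective (a₁ := (_, (1 : Equiv.Perm β)))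
    (a₂ := (_, 1)) (e.permCongr.injective h))

lemma range_comp_inl_eq_moved (hτ : τ ∈ derangements α) :
    Set.range (e ∘ Sum.inl) = {x | shufflePerm e τ x ≠ x} := by
  ext u
  obtain ⟨x | y, rfl⟩ := e.surjective u
  · simpa using hτ x
  · simp

lemma card_moved_shufflePerm [Fintype α] [Fintype γ] (hτ : τ ∈ derangements α) :
    Fintype.card {x // shufflePerm e τ x ≠ x} = Fintype.card α := by
  have hinj : Function.Injective (e ∘ Sum.inl) := e.injective.comp Sum.inl_injective
  rw [← Set.card_range_of_injective hinj]
  exact Fintype.card_congr (Equiv.setCongr (range_comp_inl_eq_moved hτ).symm)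

@[simp]
lemma shuffleLabel_apply (z : α ⊕ β) : shuffleLabel e b μ (e z) = Sum.elim b μ z := by
  simp [shuffleLabel]

lemma shuffleLabel_comp_inl_comp_inr (e : α ⊕ β ≃ γ) (a : γ → δ) :
    shuffleLabel e (a ∘ e ∘ Sum.inl) (a ∘ e ∘ Sum.inr) = a := by
  ext u
  obtain ⟨x | y, rfl⟩ := e.surjective u <;> simp

lemma shuffleLabel_inj :
    shuffleLabel e b μ = shuffleLabel e b' μ' ↔ b = b' ∧ μ = μ' := by
  rw [shuffleLabel, shuffleLabel, e.symm.surjective.injective_comp_right.eq_iff, Sum.elim_eq_iff]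

variable [LinearOrder α]

/-- The key by which a compatible shuffle is sorted: decreasing label first, then, within a block
of equal labels, drops before fixed points before excedances, then the order of `α` or `β`. -/
def shuffleKey (τ : Equiv.Perm α) (b : α → δ) (μ : β → δ) (z : α ⊕ β) :
    δᵒᵈ ×ₗ (SignType ×ₗ (α ⊕ₗ β)) :=
  toLex (OrderDual.toDual (Sum.elim b μ z), toLex (Sum.elim (moveSign τ) 0 z, toLex z))

lemma moveSign_ne_zero_of_mem_derangements (hτ : τ ∈ derangements α) (x : α) :
    moveSign τ x ≠ 0 :=
  mt moveSign_eq_zero_iff.1 (hτ x)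

lemma shuffleKey_injective : Function.Injective (shuffleKey τ b μ) := fun z z' h => by
  simp_all [shuffleKey]

variable [LinearOrder β] [LinearOrder δ]

lemma shuffleKey_lt_iff {z z' : α ⊕ β} :
    shuffleKey τ b μ z < shuffleKey τ b μ z' ↔
      Sum.elim b μ z' < Sum.elim b μ z ∨ Sum.elim b μ z = Sum.elim b μ z' ∧
        (Sum.elim (moveSign τ) 0 z < Sum.elim (moveSign τ) 0 z' ∨
          Sum.elim (moveSign τ) 0 z = Sum.elim (moveSign τ) 0 z' ∧ toLex z < toLex z') := by
  simp [shuffleKey, Prod.Lex.toLex_lt_toLex]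

variable [LinearOrder γ]

/-- A shuffle of `α` and `β` into `γ`: a bijection increasing on each of the two summands. -/
structure IsShuffle (e : α ⊕ β ≃ γ) : Prop where
  strictMono_inl : StrictMono (e ∘ Sum.inl)
  strictMono_inr : StrictMono (e ∘ Sum.inr)

lemma IsShuffle.moveSign_shufflePerm (he : IsShuffle e) (z : α ⊕ β) :
    moveSign (shufflePerm e τ) (e z) = Sum.elim (moveSign τ) 0 z := by
  rcases z with x | y
  · have hlt : e (Sum.inl (τ x)) < e (Sum.inl x) ↔ τ x < x := he.strictMono_inl.lt_iff_lt
    simp [moveSign, hlt]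
  · simp [moveSign]

lemma IsShuffle.toLex_lt_toLex (he : IsShuffle e) (hτ : τ ∈ derangements α) {z z' : α ⊕ β}
    (hlt : e z < e z') (hsign : Sum.elim (moveSign τ) 0 z = Sum.elim (moveSign τ) 0 z') :
    toLex z < toLex z' := by
  have hne := moveSign_ne_zero_of_mem_derangements hτ
  rcases z with x | y <;> rcases z' with x' | y'
  · exact Sum.Lex.inl_lt_inl_iff.2 (he.strictMono_inl.lt_iff_lt.1 hlt)
  · exact absurd hsign (hne x)
  · exact absurd hsign.symm (hne x')
  · exact Sum.Lex.inr_lt_inr_iff.2 (he.strictMono_inr.lt_iff_lt.1 hlt)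

lemma IsShuffle.lt_iff_shuffleKey_lt [Finite γ] (he : IsShuffle e) (hτ : τ ∈ derangements α)
    (hc : IsCompatible (shufflePerm e τ) (shuffleLabel e b μ)) (z z' : α ⊕ β) :
    e z < e z' ↔ shuffleKey τ b μ z < shuffleKey τ b μ z' := by
  have hmono : StrictMono (shuffleKey τ b μ ∘ e.symm) := by
    intro u v huv
    obtain ⟨z, rfl⟩ := e.surjective u
    obtain ⟨z', rfl⟩ := e.surjective v
    have hlabel := hc.antitone huv.le
    have hsign := hc.moveSign_le huv
    simp only [he.moveSign_shufflePerm, shuffleLabel_apply] at hlabel hsign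
    simp only [Function.comp_apply, Equiv.symm_apply_apply, shuffleKey_lt_iff]
    refine hlabel.lt_or_eq.imp id fun heq => ⟨heq.symm, ?_⟩
    exact (hsign heq.symm).lt_or_eq.imp id fun h => ⟨h, he.toLex_lt_toLex hτ huv h⟩
  simpa using (hmono.lt_iff_lt (a := e z) (b := e z')).symm

lemma isShuffle_of_lt_iff_shuffleKey_lt (hb : IsCompatible τ b) (hμ : Antitone μ) [Finite α]
    (he : ∀ z z', e z < e z' ↔ shuffleKey τ b μ z < shuffleKey τ b μ z') : IsShuffle e where
  strictMono_inl x y hxy := by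
    simp only [Function.comp_apply, he, shuffleKey_lt_iff, Sum.elim_inl, Sum.Lex.inl_lt_inl_iff]
    refine (hb.antitone hxy.le).lt_or_eq.imp id fun heq => ⟨heq.symm, ?_⟩
    exact (hb.moveSign_le hxy heq.symm).lt_or_eq.imp id fun h => ⟨h, hxy⟩
  strictMono_inr x y hxy := by
    simp only [Function.comp_apply, he, shuffleKey_lt_iff, Sum.elim_inr, Sum.Lex.inr_lt_inr_iff]
    exact (hμ hxy.le).lt_or_eq.imp id fun heq => ⟨heq.symm, .inr ⟨rfl, hxy⟩⟩

lemma isCompatible_of_lt_iff_shuffleKey_lt (hτ : τ ∈ derangements α) (hb : IsCompatible τ b)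
    (hs : IsShuffle e) (he : ∀ z z', e z < e z' ↔ shuffleKey τ b μ z < shuffleKey τ b μ z') :
    IsCompatible (shufflePerm e τ) (shuffleLabel e b μ) where
  antitone := by
    refine antitone_iff_forall_lt.2 fun u v huv => ?_
    obtain ⟨z, rfl⟩ := e.surjective u
    obtain ⟨z', rfl⟩ := e.surjective v
    rw [shuffleLabel_apply, shuffleLabel_apply]
    exact (shuffleKey_lt_iff.1 ((he z z').1 huv)).elim le_of_lt fun h => h.1.ge
  lt_of_eq u v huv heq := by
    obtain ⟨z, rfl⟩ := e.surjective u
    obtain ⟨z', rfl⟩ := e.surjective v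
    rw [shuffleLabel_apply, shuffleLabel_apply] at heq
    have hsign : Sum.elim (moveSign τ) 0 z ≤ Sum.elim (moveSign τ) 0 z' :=
      (shuffleKey_lt_iff.1 ((he z z').1 huv)).elim (fun h => absurd heq h.ne')
        fun h => h.2.elim le_of_lt fun h => h.1.le
    rcases z with x | y <;> rcases z' with x' | y' <;>
      simp only [shufflePerm_inl, shufflePerm_inr]
    · exact hs.strictMono_inl (hb.lt_of_eq (hs.strictMono_inl.lt_iff_lt.1 huv) heq)
    · have hdrop : τ x < x := (moveSign_nonpos_iff.1 hsign).lt_of_ne (hτ x)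
      exact (hs.strictMono_inl hdrop).trans huv
    · have hexc : x' < τ x' := (moveSign_nonneg_iff.1 hsign).lt_of_ne (hτ x').symm
      exact huv.trans (hs.strictMono_inl hexc)
    · exact huv

lemma existsUnique_equiv_lt_iff {T κ : Type*} [LinearOrder κ] [Fintype T] [Fintype γ] {f : T → κ}
    (hf : Function.Injective f) (hcard : Fintype.card T = Fintype.card γ) :
    ∃! e : T ≃ γ, ∀ z z', e z < e z' ↔ f z < f z' := by
  let _ : LinearOrder T := LinearOrder.lift' f hf
  let e : T ≃o γ :=
    (Fintype.orderIsoFinOfCardEq T hcard).symm.trans (Fintype.orderIsoFinOfCardEq γ rfl)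
  refine ⟨e.toEquiv, fun z z' => e.lt_iff_lt, fun e' he' => ?_⟩
  let f' : T ≃o γ := ⟨e', fun {z z'} => le_iff_le_iff_lt_iff_lt.2 (he' z' z)⟩
  exact congrArg RelIso.toEquiv (Subsingleton.elim f' e)

theorem existsUnique_compatible_shuffle [Fintype α] [Fintype β] [Fintype γ]
    (hcard : Fintype.card γ = Fintype.card α + Fintype.card β) (hτ : τ ∈ derangements α)
    (hb : IsCompatible τ b) (hμ : Antitone μ) :
    ∃! e : α ⊕ β ≃ γ, IsShuffle e ∧ IsCompatible (shufflePerm e τ) (shuffleLabel e b μ) := by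
  obtain ⟨e, he, huniq⟩ := existsUnique_equiv_lt_iff (γ := γ)
    (shuffleKey_injective (τ := τ) (b := b) (μ := μ)) (by rw [Fintype.card_sum, hcard])
  have hs := isShuffle_of_lt_iff_shuffleKey_lt hb hμ he
  exact ⟨e, ⟨hs, isCompatible_of_lt_iff_shuffleKey_lt hτ hb hs he⟩,
    fun e' ⟨hs', hc'⟩ => huniq e' (hs'.lt_iff_shuffleKey_lt hτ hc')⟩

lemma IsShuffle.eq_of_range_eq [Finite α] [Finite β] (he : IsShuffle e) (he' : IsShuffle e')
    (hrange : Set.range (e ∘ Sum.inl) = Set.range (e' ∘ Sum.inl)) : e = e' := by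
  have hrange' : Set.range (e ∘ Sum.inr) = Set.range (e' ∘ Sum.inr) := by
    simp only [Set.range_comp, ← Set.compl_range_inl, Set.image_compl_eq e.bijective,
      Set.image_compl_eq e'.bijective] at hrange ⊢
    rw [hrange]
  have hinl := (StrictMono.range_inj he.strictMono_inl he'.strictMono_inl).1 hrange
  have hinr := (StrictMono.range_inj he.strictMono_inr he'.strictMono_inr).1 hrange'
  ext (x | y)
  exacts [congrFun hinl x, congrFun hinr y]

lemma exists_shuffle_of_card_moved [Fintype α] [Fintype β] [Fintype γ] {σ : Equiv.Perm γ}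
    (hcard : Fintype.card γ = Fintype.card α + Fintype.card β)
    (hσ : Fintype.card {x // σ x ≠ x} = Fintype.card α) :
    ∃ (e : α ⊕ β ≃ γ) (τ : Equiv.Perm α),
      IsShuffle e ∧ τ ∈ derangements α ∧ shufflePerm e τ = σ := by
  have hσ' : Fintype.card {x // ¬ σ x ≠ x} = Fintype.card β := by
    rw [Fintype.card_subtype_compl, hσ, hcard, Nat.add_sub_cancel_left]
  let i : α ≃o {x // σ x ≠ x} :=
    (Fintype.orderIsoFinOfCardEq α rfl).symm.trans (Fintype.orderIsoFinOfCardEq _ hσ)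
  let j : β ≃o {x // ¬ σ x ≠ x} :=
    (Fintype.orderIsoFinOfCardEq β rfl).symm.trans (Fintype.orderIsoFinOfCardEq _ hσ')
  let e : α ⊕ β ≃ γ := (i.toEquiv.sumCongr j.toEquiv).trans (Equiv.sumCompl fun x => σ x ≠ x)
  let τ : Equiv.Perm α := i.toEquiv.symm.permCongr (σ.subtypePerm fun x => by simp)
  have he_inl : ∀ x, e (Sum.inl x) = i x := fun x => by simp [e]
  have he_inr : ∀ y, e (Sum.inr y) = j y := fun y => by simp [e]
  have hτ : ∀ x, (i (τ x) : γ) = σ (i x) := fun x => by simp [τ]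
  refine ⟨e, τ, ⟨fun x y h => ?_, fun x y h => ?_⟩, fun x hx => ?_, Equiv.ext fun u => ?_⟩
  · simpa [he_inl] using h
  · simpa [he_inr] using h
  · exact (i x).2 (by rw [← hτ, hx])
  · obtain ⟨x | y, rfl⟩ := e.surjective u
    · rw [shufflePerm_inl, he_inl, he_inl, hτ]
    · rw [shufflePerm_inr, he_inr, not_not.1 (j y).2]

lemma IsShuffle.isCompatible_of_shufflePerm (he : IsShuffle e) {a : γ → δ}
    (h : IsCompatible (shufflePerm e τ) a) : IsCompatible τ (a ∘ e ∘ Sum.inl) where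
  antitone := h.antitone.comp_monotone he.strictMono_inl.monotone
  lt_of_eq x y hxy heq := by
    have := h.lt_of_eq (he.strictMono_inl hxy) heq
    simpa [← he.strictMono_inl.lt_iff_lt (a := τ x)] using this

variable (α δ) in
/-- A derangement of `α` together with a compatible labelling. -/
abbrev CompatibleDerangement : Type _ :=
  {p : Equiv.Perm α × (α → δ) // p.1 ∈ derangements α ∧ IsCompatible p.1 p.2}

variable (γ δ) in
/-- A permutation of `γ` moving exactly `k` points, together with a compatible labelling. -/
abbrev CompatiblePermMoving [Fintype γ] (k : ℕ) : Type _ :=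
  {p : Equiv.Perm γ × (γ → δ) // Fintype.card {x // p.1 x ≠ x} = k ∧ IsCompatible p.1 p.2}

theorem exists_equiv_compatiblePermMoving [Fintype α] [Fintype β] [Fintype γ]
    (hcard : Fintype.card γ = Fintype.card α + Fintype.card β) :
    ∃ E : CompatibleDerangement α δ × {μ : β → δ // Antitone μ} ≃
        CompatiblePermMoving γ δ (Fintype.card α),
      ∀ p μ, ∃ e : α ⊕ β ≃ γ, (E (p, μ)).1.2 = shuffleLabel e p.1.2 μ.1 := by
  choose e he huniq using fun r : CompatibleDerangement α δ × {μ : β → δ // Antitone μ} =>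
    existsUnique_compatible_shuffle hcard r.1.2.1 r.1.2.2 r.2.2
  refine ⟨Equiv.ofBijective
    (fun r => ⟨(shufflePerm (e r) r.1.1.1, shuffleLabel (e r) r.1.1.2 r.2.1),
      card_moved_shufflePerm r.1.2.1, (he r).2⟩)
    ⟨fun r r' h => ?_, ?_⟩, fun p μ => ⟨e (p, μ), rfl⟩⟩
  · obtain ⟨hperm, hlabel⟩ : shufflePerm (e r) r.1.1.1 = shufflePerm (e r') r'.1.1.1 ∧
        shuffleLabel (e r) r.1.1.2 r.2.1 = shuffleLabel (e r') r'.1.1.2 r'.2.1 :=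
      Prod.ext_iff.1 (Subtype.ext_iff.1 h)
    have hee : e r = e r' := (he r).1.eq_of_range_eq (he r').1 <| by
      rw [range_comp_inl_eq_moved r.1.2.1, range_comp_inl_eq_moved r'.1.2.1, hperm]
    simp only [hee, shuffleLabel_inj] at hperm hlabel
    exact Prod.ext (Subtype.ext (Prod.ext (shufflePerm_injective hperm) hlabel.1))
      (Subtype.ext hlabel.2)
  · rintro ⟨⟨σ, a⟩, hσ, hc⟩
    obtain ⟨e', τ, hs, hτ, rfl⟩ := exists_shuffle_of_card_moved hcard hσ
    have hlabel := shuffleLabel_comp_inl_comp_inr e' a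
    let r : CompatibleDerangement α δ × {μ : β → δ // Antitone μ} :=
      (⟨(τ, a ∘ e' ∘ Sum.inl), hτ, hs.isCompatible_of_shufflePerm hc⟩,
        ⟨a ∘ e' ∘ Sum.inr, hc.antitone.comp_monotone hs.strictMono_inr.monotone⟩)
    have hee : e' = e r := huniq r e' ⟨hs, by rwa [hlabel]⟩
    refine ⟨r, Subtype.ext (Prod.ext ?_ ?_)⟩
    · exact congrArg (shufflePerm · τ) hee.symm
    · exact (congrArg (shuffleLabel · _ _) hee.symm).trans hlabel

end Shuffle

section Descents

variable {ω : Type*} [LinearOrder ω] {w : ℕ → ω} {n x y i : ℕ}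

/-- The number of descents of the word `w 0, …, w (n - 1)` at or after position `i`. These are the
labels of the least labelling compatible with `w`. -/
def descentsFrom (n : ℕ) (w : ℕ → ω) (i : ℕ) : ℕ :=
  #{j ∈ Ico i (n - 1) | w (j + 1) < w j}

lemma antitone_descentsFrom : Antitone (descentsFrom n w) := fun _ _ h =>
  card_le_card (filter_subset_filter _ (Ico_subset_Ico_left h))

lemma descentsFrom_eq_zero (hi : n ≤ i + 1) : descentsFrom n w i = 0 := by
  simp [descentsFrom, Ico_eq_empty_of_le (show n - 1 ≤ i by lia)]

lemma descentsFrom_eq_add (hi : i + 1 < n) :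
    descentsFrom n w i = descentsFrom n w (i + 1) + if w (i + 1) < w i then 1 else 0 := by
  simp only [descentsFrom, card_filter]
  rw [sum_eq_sum_Ico_succ_bot (by lia), add_comm]

lemma sum_descentsFrom (n : ℕ) (w : ℕ → ℤ) : ∑ i : Fin n, descentsFrom n w i = majStat n w := by
  rw [Fin.sum_univ_eq_sum_range (descentsFrom n w), majStat]
  simp only [descentsFrom, card_filter]
  rw [sum_comm' (t' := range (n - 1)) (s' := fun j => range (j + 1))
    fun i j => by simp only [mem_range, mem_Ico]; lia]
  refine sum_congr rfl fun j _ => ?_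
  split_ifs <;> simp

lemma lt_of_descentsFrom_eq (hw : Set.InjOn w (Set.Iio n)) (hxy : x < y) (hy : y < n)
    (h : descentsFrom n w x = descentsFrom n w y) : w x < w y := by
  have hmono : MonotoneOn w (Set.Icc x y) :=
    monotoneOn_of_le_add_one Set.ordConnected_Icc fun j _ hj hj' => by
      have hstep := descentsFrom_eq_add (w := w) (hj'.2.trans_lt hy)
      have hxj := antitone_descentsFrom (n := n) (w := w) hj.1
      have hjy := antitone_descentsFrom (n := n) (w := w) hj'.2
      by_contra! hlt
      rw [if_pos hlt] at hstep
      lia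
  refine (hmono (Set.left_mem_Icc.2 hxy.le) (Set.right_mem_Icc.2 hxy.le) hxy.le).lt_of_ne ?_
  exact hw.ne (hxy.trans hy) hy hxy.ne

lemma IsCompatible.add_le {a : Fin n → ℕ} (h : IsCompatible (fun i : Fin n => w i) a)
    (hi : i + 1 < n) :
    a ⟨i + 1, hi⟩ + (if w (i + 1) < w i then 1 else 0) ≤ a ⟨i, by lia⟩ := by
  have hlt : (⟨i, by lia⟩ : Fin n) < ⟨i + 1, hi⟩ := Nat.lt_succ_self i
  split_ifs with hdesc
  · exact (h.antitone hlt.le).lt_of_ne fun heq => hdesc.asymm (h.lt_of_eq hlt heq.symm)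
  · exact h.antitone hlt.le

lemma IsCompatible.descentsFrom_le {a : Fin n → ℕ} (h : IsCompatible (fun i : Fin n => w i) a)
    (hi : i < n) : descentsFrom n w i ≤ a ⟨i, hi⟩ := by
  have hle : i ≤ n - 1 := Nat.le_sub_one_of_lt hi
  induction hle using Nat.decreasingInduction with
  | self => simp [descentsFrom_eq_zero (show n ≤ n - 1 + 1 by lia)]
  | of_succ i hlt ih =>
    have hi' : i + 1 < n := by lia
    rw [descentsFrom_eq_add hi']
    exact (Nat.add_le_add_right (ih hi') _).trans (h.add_le hi')

lemma isCompatible_add_descentsFrom_iff (hw : Set.InjOn w (Set.Iio n)) {μ : Fin n → ℕ} :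
    IsCompatible (fun i : Fin n => w i) (fun i => μ i + descentsFrom n w i) ↔ Antitone μ := by
  refine ⟨fun h => ?_, fun hμ => ⟨fun x y hxy => ?_, fun x y hxy heq => ?_⟩⟩
  · obtain _ | n := n
    · exact fun i => i.elim0
    refine Fin.antitone_iff_succ_le.2 fun i => ?_
    have hstep := descentsFrom_eq_add (w := w) (Nat.succ_lt_succ i.2)
    have := h.add_le (Nat.succ_lt_succ i.2)
    change μ i.succ + _ + _ ≤ μ i.castSucc + _ at this
    lia
  · exact Nat.add_le_add (hμ hxy) (antitone_descentsFrom hxy)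
  · have hle := hμ hxy.le
    have hle' := antitone_descentsFrom (n := n) (w := w) hxy.le
    exact lt_of_descentsFrom_eq hw hxy y.2 (by lia)

/-- Subtracting the least compatible labelling turns compatible labellings into partitions. -/
def antitoneEquivCompatible (hw : Set.InjOn w (Set.Iio n)) :
    {μ : Fin n → ℕ // Antitone μ} ≃ {a : Fin n → ℕ // IsCompatible (fun i : Fin n => w i) a} where
  toFun μ := ⟨fun i => μ.1 i + descentsFrom n w i, (isCompatible_add_descentsFrom_iff hw).2 μ.2⟩
  invFun a := ⟨fun i => a.1 i - descentsFrom n w i, (isCompatible_add_descentsFrom_iff hw).1 <| by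
    simpa only [Nat.sub_add_cancel (a.2.descentsFrom_le (Fin.is_lt _))] using a.2⟩
  left_inv μ := by simp
  right_inv a := Subtype.ext (funext fun i => Nat.sub_add_cancel (a.2.descentsFrom_le i.2))

end Descents

section GeneratingFunctions

open scoped ENNReal

variable {n : ℕ} (q : ℝ≥0∞)

/-- An antitone sequence of length `n + 1` amounts to its last term `m` together with the antitone
sequence of length `n` left over after subtracting `m` from the other terms. -/
def antitoneSnocEquiv (n : ℕ) :
    {μ : Fin (n + 1) → ℕ // Antitone μ} ≃ ℕ × {ν : Fin n → ℕ // Antitone ν} where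
  toFun μ := (μ.1 (Fin.last n), ⟨fun i => μ.1 i.castSucc - μ.1 (Fin.last n), fun _ _ h =>
    Nat.sub_le_sub_right (μ.2 (Fin.castSucc_le_castSucc_iff.2 h)) _⟩)
  invFun p := ⟨Fin.snoc (α := fun _ => ℕ) (fun i => p.2.1 i + p.1) p.1, by
    intro i j hij
    induction i using Fin.lastCases <;> induction j using Fin.lastCases
    · simp
    · exact absurd hij (Fin.castSucc_lt_last _).not_ge
    · simp
    · simpa using p.2.2 (Fin.castSucc_le_castSucc_iff.1 hij)⟩
  left_inv μ := by
    ext i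
    induction i using Fin.lastCases
    · simp
    · simp [Nat.sub_add_cancel (μ.2 (Fin.le_last _))]
  right_inv p := by simp

theorem tsum_antitone_pow (n : ℕ) :
    ∑' μ : {μ : Fin n → ℕ // Antitone μ}, q ^ ∑ i, μ.1 i = ∏ i ∈ range n, (1 - q ^ (i + 1))⁻¹ := by
  induction n with
  | zero =>
    have : Unique {μ : Fin 0 → ℕ // Antitone μ} :=
      ⟨⟨⟨Fin.elim0, fun i => i.elim0⟩⟩, fun _ => Subtype.ext (Subsingleton.elim _ _)⟩
    simp
  | succ n ih =>
    rw [← (antitoneSnocEquiv n).symm.tsum_eq, ENNReal.tsum_prod', prod_range_succ, ← ih,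
      mul_comm, ← ENNReal.tsum_geometric, ← ENNReal.tsum_mul_right]
    refine tsum_congr fun m => ?_
    rw [← ENNReal.tsum_mul_left]
    refine tsum_congr fun ν => ?_
    simp only [antitoneSnocEquiv, Equiv.coe_fn_symm_mk, Fin.sum_univ_castSucc, Fin.snoc_castSucc,
      Fin.snoc_last, sum_add_distrib, sum_const, card_univ, Fintype.card_fin, smul_eq_mul]
    ring

theorem tsum_isCompatible_pow {w : ℕ → ℤ} (hw : Set.InjOn w (Set.Iio n)) :
    ∑' a : {a : Fin n → ℕ // IsCompatible (fun i : Fin n => w i) a}, q ^ ∑ i, a.1 i =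
      q ^ majStat n w * ∏ i ∈ range n, (1 - q ^ (i + 1))⁻¹ := by
  rw [← (antitoneEquivCompatible hw).tsum_eq, ← tsum_antitone_pow, ← ENNReal.tsum_mul_left]
  refine tsum_congr fun μ => ?_
  simp only [antitoneEquivCompatible, Equiv.coe_fn_mk, sum_add_distrib, sum_descentsFrom]
  ring

lemma pword_apply (σ : Equiv.Perm (Fin n)) (i : Fin n) : pword n σ i = (σ i : ℤ) + 1 := by
  simp [pword]

lemma injOn_pword (σ : Equiv.Perm (Fin n)) : Set.InjOn (pword n σ) (Set.Iio n) :=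
  fun i hi j hj h => by
    have heq := (pword_apply σ ⟨i, hi⟩).symm.trans (h.trans (pword_apply σ ⟨j, hj⟩))
    exact Fin.mk.inj (σ.injective (Fin.ext (by simpa using heq)))

theorem tsum_isCompatible_perm_pow (σ : Equiv.Perm (Fin n)) :
    ∑' a : {a : Fin n → ℕ // IsCompatible σ a}, q ^ ∑ i, a.1 i =
      q ^ majStat n (pword n σ) * ∏ i ∈ range n, (1 - q ^ (i + 1))⁻¹ := by
  rw [← tsum_isCompatible_pow q (injOn_pword σ)]
  have hiff (a : Fin n → ℕ) :
      IsCompatible σ a ↔ IsCompatible (fun i : Fin n => pword n σ i) a := by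
    have hlt (x y : Fin n) : pword n σ x < pword n σ y ↔ σ x < σ y := by
      simp only [pword_apply, add_lt_add_iff_right, Nat.cast_lt, Fin.val_fin_lt]
    exact ⟨fun h => ⟨h.antitone, fun x y hxy heq => (hlt x y).2 (h.lt_of_eq hxy heq)⟩,
      fun h => ⟨h.antitone, fun x y hxy heq => (hlt x y).1 (h.lt_of_eq hxy heq)⟩⟩
  exact (Equiv.subtypeEquivRight hiff).tsum_eq fun a => q ^ ∑ i, a.1 i

theorem tsum_pow_sum (n : ℕ) : ∑' f : Fin n → ℕ, q ^ ∑ i, f i = ((1 - q)⁻¹) ^ n := by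
  induction n with
  | zero => simp
  | succ n ih =>
    rw [← (Fin.consEquiv fun _ => ℕ).tsum_eq, ENNReal.tsum_prod', pow_succ', ← ih,
      ← ENNReal.tsum_geometric, ← ENNReal.tsum_mul_right]
    refine tsum_congr fun m => ?_
    rw [← ENNReal.tsum_mul_left]
    refine tsum_congr fun f => ?_
    simp [Fin.consEquiv, Fin.sum_univ_succ, pow_add]

lemma isCompatible_comp_iff_eq_sort {δ : Type*} [LinearOrder δ] {σ : Equiv.Perm (Fin n)}
    {f : Fin n → δ} : IsCompatible σ (f ∘ σ) ↔ σ = Tuple.sort (OrderDual.toDual ∘ f) := by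
  rw [Tuple.eq_sort_iff]
  exact ⟨fun h => ⟨h.antitone, h.lt_of_eq⟩, fun h => ⟨h.1, h.2⟩⟩

/-- Reading a word along `σ` identifies the words whose stable sort by decreasing letter is `σ`
with the labellings compatible with `σ`. -/
def compatibleEquivSort {δ : Type*} [LinearOrder δ] (σ : Equiv.Perm (Fin n)) :
    {f : Fin n → δ // Tuple.sort (OrderDual.toDual ∘ f) = σ} ≃
      {a : Fin n → δ // IsCompatible σ a} :=
  (σ.symm.arrowCongr (Equiv.refl δ)).subtypeEquiv fun f => by
    rw [eq_comm, ← isCompatible_comp_iff_eq_sort]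
    rfl

theorem sum_tsum_isCompatible_pow (n : ℕ) :
    ∑ σ : Equiv.Perm (Fin n), ∑' a : {a : Fin n → ℕ // IsCompatible σ a}, q ^ ∑ i, a.1 i =
      ((1 - q)⁻¹) ^ n := by
  rw [← tsum_pow_sum, ← (Equiv.sigmaFiberEquiv fun f : Fin n → ℕ =>
    Tuple.sort (OrderDual.toDual ∘ f)).tsum_eq, ENNReal.tsum_sigma', tsum_fintype]
  refine sum_congr rfl fun σ _ => ?_
  rw [← (compatibleEquivSort σ).tsum_eq]
  exact tsum_congr fun f => congrArg (q ^ ·) (Equiv.sum_comp σ f.1)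

lemma tsum_subtype_prod_and {ι κ : Type*} [Fintype ι] (P : ι → Prop) [DecidablePred P]
    (C : ι → κ → Prop) (f : κ → ℝ≥0∞) :
    ∑' p : {p : ι × κ // P p.1 ∧ C p.1 p.2}, f p.1.2 =
      ∑ i : ι with P i, ∑' a : {a // C i a}, f a := by
  refine (tsum_subtype {p : ι × κ | P p.1 ∧ C p.1 p.2} fun p => f p.2).trans ?_
  rw [ENNReal.tsum_prod', tsum_fintype, sum_filter]
  refine sum_congr rfl fun i _ => ?_
  split_ifs with hi
  · refine Eq.trans ?_ (tsum_subtype {a | C i a} f).symm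
    simp [Set.indicator, hi]
  · simp [Set.indicator, hi]

theorem sum_card_moved_tsum_isCompatible_pow {α β γ : Type*} [LinearOrder α] [LinearOrder β]
    [LinearOrder γ] [Fintype α] [Fintype β] [Fintype γ]
    (hcard : Fintype.card γ = Fintype.card α + Fintype.card β) :
    ∑ σ : Equiv.Perm γ with Fintype.card {x // σ x ≠ x} = Fintype.card α,
        ∑' a : {a : γ → ℕ // IsCompatible σ a}, q ^ ∑ i, a.1 i =
      (∑ τ : Equiv.Perm α with ∀ x, τ x ≠ x,
        ∑' b : {b : α → ℕ // IsCompatible τ b}, q ^ ∑ i, b.1 i) *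
      ∑' μ : {μ : β → ℕ // Antitone μ}, q ^ ∑ i, μ.1 i := by
  obtain ⟨E, hE⟩ := exists_equiv_compatiblePermMoving (δ := ℕ) hcard
  rw [← tsum_subtype_prod_and (fun σ : Equiv.Perm γ => Fintype.card {x // σ x ≠ x} = Fintype.card α)
      (fun σ a => IsCompatible σ a) fun a => q ^ ∑ i, a i,
    ← tsum_subtype_prod_and (fun τ : Equiv.Perm α => ∀ x, τ x ≠ x)
      (fun τ b => IsCompatible τ b) fun b => q ^ ∑ i, b i,
    ← E.tsum_eq, ENNReal.tsum_prod', ← ENNReal.tsum_mul_right]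
  refine tsum_congr fun p => ?_
  rw [← ENNReal.tsum_mul_left]
  refine tsum_congr fun μ => ?_
  obtain ⟨e, he⟩ := hE p μ
  rw [he, ← pow_add, ← Equiv.sum_comp e]
  simp

theorem inv_one_sub_pow_eq_sum (n : ℕ) :
    ((1 - q)⁻¹) ^ n = ∑ k ∈ range (n + 1),
      (∑ τ : Equiv.Perm (Fin k) with ∀ x, τ x ≠ x, q ^ majStat k (pword k τ)) *
        (∏ i ∈ range k, (1 - q ^ (i + 1))⁻¹) * ∏ i ∈ range (n - k), (1 - q ^ (i + 1))⁻¹ := by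
  have hmaps (σ : Equiv.Perm (Fin n)) (_ : σ ∈ univ) :
      Fintype.card {x // σ x ≠ x} ∈ range (n + 1) :=
    mem_range_succ_iff.2 ((Fintype.card_subtype_le _).trans_eq (Fintype.card_fin n))
  rw [← sum_tsum_isCompatible_pow, ← sum_fiberwise_of_maps_to hmaps]
  refine sum_congr rfl fun k hk => ?_
  have hcard : Fintype.card (Fin n) = Fintype.card (Fin k) + Fintype.card (Fin (n - k)) := by
    simp [Nat.add_sub_cancel' (mem_range_succ_iff.1 hk)]
  have hsum := sum_card_moved_tsum_isCompatible_pow q hcard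
  rw [Fintype.card_fin k] at hsum
  simp only [tsum_isCompatible_perm_pow, tsum_antitone_pow, ← sum_mul] at hsum ⊢
  convert hsum

end GeneratingFunctions

section GaussianBinomial

variable {R S : Type*} [CommRing R] [CommRing S] (q : R)

/-- The `q`-factorial `[n]_q! = ∏_{i ≤ n} (1 + q + ⋯ + q ^ (i - 1))`, the polynomial form of
`(q;q)_n / (1 - q)^n`. -/
def qFactorial (n : ℕ) : R :=
  ∏ i ∈ range n, ∑ j ∈ range (i + 1), q ^ j

/-- The Gaussian binomial coefficient, defined by the `q`-Pascal rule so that it makes sense where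
the quotient `(q;q)_n / ((q;q)_k (q;q)_{n-k})` does not. -/
def qChoose : ℕ → ℕ → R
  | _, 0 => 1
  | 0, _ + 1 => 0
  | n + 1, k + 1 => qChoose n k + q ^ (k + 1) * qChoose n (k + 1)

lemma qq_eq_pow_mul_qFactorial (n : ℕ) : qq q n = (1 - q) ^ n * qFactorial q n := by
  simp only [qq, qFactorial, ← mul_neg_geom_sum, prod_mul_distrib, prod_const, card_range]

lemma qq_succ (n : ℕ) : qq q (n + 1) = qq q n * (1 - q ^ (n + 1)) :=
  prod_range_succ _ n

lemma qChoose_eq_zero_of_lt {n k : ℕ} (h : n < k) : qChoose q n k = 0 := by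
  induction n generalizing k with
  | zero => obtain ⟨k, rfl⟩ := Nat.exists_eq_add_one.2 h; rw [qChoose]
  | succ n ih =>
    obtain ⟨k, rfl⟩ := Nat.exists_eq_add_one.2 (Nat.zero_lt_of_lt h)
    rw [qChoose, ih (by lia), ih (by lia), mul_zero, add_zero]

lemma qChoose_self (n : ℕ) : qChoose q n n = 1 := by
  induction n with
  | zero => rw [qChoose]
  | succ n ih => rw [qChoose, ih, qChoose_eq_zero_of_lt q n.lt_succ_self, mul_zero, add_zero]

theorem qChoose_add_mul_qq_mul_qq (i j : ℕ) :
    qChoose q (i + j) i * (qq q i * qq q j) = qq q (i + j) := by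
  induction i generalizing j with
  | zero => simp [qChoose, qq]
  | succ i ihi =>
    induction j with
    | zero => simp [qChoose_self, qq]
    | succ j ihj =>
      have hleft := ihi (j + 1)
      rw [show i + 1 + (j + 1) = i + (j + 1) + 1 by lia, qChoose]
      rw [show i + 1 + j = i + (j + 1) by lia] at ihj
      rw [qq_succ] at hleft ihj ⊢
      rw [qq_succ q (i + (j + 1)), qq_succ q j]
      linear_combination (1 - q ^ (i + 1)) * hleft + q ^ (i + 1) * (1 - q ^ (j + 1)) * ihj

lemma qFactorial_eq_div {K : Type*} [Field K] {q : K} (hq : 1 - q ≠ 0) (n : ℕ) :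
    qFactorial q n = qq q n / (1 - q) ^ n := by
  rw [qq_eq_pow_mul_qFactorial, mul_div_cancel_left₀ _ (pow_ne_zero n hq)]

lemma qChoose_eq_div {K : Type*} [Field K] {q : K} {n k : ℕ} (hkn : k ≤ n) (hk : qq q k ≠ 0)
    (hnk : qq q (n - k) ≠ 0) : qChoose q n k = qq q n / (qq q k * qq q (n - k)) := by
  rw [eq_div_iff (mul_ne_zero hk hnk)]
  simpa only [Nat.add_sub_cancel' hkn] using qChoose_add_mul_qq_mul_qq q k (n - k)

variable {F : Type*} [FunLike F R S] [RingHomClass F R S] (f : F)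

lemma map_qFactorial (n : ℕ) : f (qFactorial q n) = qFactorial (f q) n := by
  simp [qFactorial]

lemma map_qChoose (n k : ℕ) : f (qChoose q n k) = qChoose (f q) n k := by
  induction n generalizing k with
  | zero => cases k <;> simp [qChoose]
  | succ n ih => cases k <;> simp [qChoose, ih]

lemma map_Dmaj (n : ℕ) : f (Dmaj q n) = Dmaj (f q) n := by
  simp [Dmaj]

end GaussianBinomial

section Identity

variable {q : ℝ}

lemma one_sub_pow_pos (h0 : 0 ≤ q) (h1 : q < 1) (i : ℕ) : 0 < 1 - q ^ (i + 1) :=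
  sub_pos.2 (pow_lt_one₀ h0 h1 i.succ_ne_zero)

lemma qq_pos (h0 : 0 ≤ q) (h1 : q < 1) (n : ℕ) : 0 < qq q n :=
  prod_pos fun i _ => one_sub_pow_pos h0 h1 i

lemma Dmaj_nonneg (h0 : 0 ≤ q) (n : ℕ) : 0 ≤ Dmaj q n :=
  sum_nonneg fun _ _ => pow_nonneg h0 _

lemma inv_one_sub_ofReal_pow (h0 : 0 ≤ q) (h1 : q < 1) (i : ℕ) :
    (1 - ENNReal.ofReal q ^ (i + 1))⁻¹ = ENNReal.ofReal (1 - q ^ (i + 1))⁻¹ := by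
  rw [ENNReal.ofReal_inv_of_pos (one_sub_pow_pos h0 h1 i), ENNReal.ofReal_sub _ (pow_nonneg h0 _),
    ENNReal.ofReal_one, ENNReal.ofReal_pow h0]

lemma prod_inv_one_sub_ofReal_pow (h0 : 0 ≤ q) (h1 : q < 1) (n : ℕ) :
    ∏ i ∈ range n, (1 - ENNReal.ofReal q ^ (i + 1))⁻¹ = ENNReal.ofReal (qq q n)⁻¹ := by
  simp only [inv_one_sub_ofReal_pow h0 h1, qq, ← prod_inv_distrib]
  exact (ENNReal.ofReal_prod_of_nonneg fun i _ => (inv_pos.2 (one_sub_pow_pos h0 h1 i)).le).symm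

lemma sum_ofReal_pow_majStat (h0 : 0 ≤ q) (n : ℕ) :
    ∑ τ : Equiv.Perm (Fin n) with ∀ x, τ x ≠ x, ENNReal.ofReal q ^ majStat n (pword n τ) =
      ENNReal.ofReal (Dmaj q n) := by
  simp only [Dmaj, ← ENNReal.ofReal_pow h0]
  exact (ENNReal.ofReal_sum_of_nonneg fun _ _ => pow_nonneg h0 _).symm

lemma inv_one_sub_pow_eq_sum_Dmaj (h0 : 0 ≤ q) (h1 : q < 1) (n : ℕ) :
    ((1 - q)⁻¹) ^ n =
      ∑ k ∈ range (n + 1), Dmaj q k * (qq q k)⁻¹ * (qq q (n - k))⁻¹ := by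
  have hinv (k : ℕ) : 0 ≤ (qq q k)⁻¹ := (inv_pos.2 (qq_pos h0 h1 k)).le
  have hterm (k : ℕ) : 0 ≤ Dmaj q k * (qq q k)⁻¹ := mul_nonneg (Dmaj_nonneg h0 k) (hinv k)
  have hbase : (1 - ENNReal.ofReal q)⁻¹ = ENNReal.ofReal (1 - q)⁻¹ := by
    simpa using inv_one_sub_ofReal_pow h0 h1 0
  have hbase0 : 0 ≤ (1 - q)⁻¹ := (inv_pos.2 (sub_pos.2 h1)).le
  have h := inv_one_sub_pow_eq_sum (ENNReal.ofReal q) n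
  simp only [hbase, prod_inv_one_sub_ofReal_pow h0 h1, sum_ofReal_pow_majStat h0,
    ← ENNReal.ofReal_mul (Dmaj_nonneg h0 _), ← ENNReal.ofReal_mul (hterm _),
    ← ENNReal.ofReal_pow hbase0] at h
  rw [← ENNReal.ofReal_sum_of_nonneg fun k _ => mul_nonneg (hterm k) (hinv _)] at h
  exact (ENNReal.ofReal_eq_ofReal_iff (pow_nonneg hbase0 n)
    (sum_nonneg fun k _ => mul_nonneg (hterm k) (hinv _))).1 h

lemma qFactorial_eq_sum_of_lt_one (h0 : 0 ≤ q) (h1 : q < 1) (n : ℕ) :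
    qFactorial q n = ∑ k ∈ range (n + 1), qChoose q n k * Dmaj q k := by
  have hqq (k : ℕ) : qq q k ≠ 0 := (qq_pos h0 h1 k).ne'
  rw [qFactorial_eq_div (sub_pos.2 h1).ne', div_eq_mul_inv, ← inv_pow,
    inv_one_sub_pow_eq_sum_Dmaj h0 h1, mul_sum]
  refine sum_congr rfl fun k hk => ?_
  rw [qChoose_eq_div (mem_range_succ_iff.1 hk) (hqq _) (hqq _), div_eq_mul_inv, mul_inv]
  ring

open Polynomial in
lemma qFactorial_X_eq_sum (n : ℕ) :
    qFactorial (X : ℤ[X]) n = ∑ k ∈ range (n + 1), qChoose X n k * Dmaj X k := by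
  apply map_injective (algebraMap ℤ ℝ) (algebraMap ℤ ℝ).injective_int
  refine eq_of_infinite_eval_eq _ _ ((Set.Ico_infinite one_pos).mono fun q hq => ?_)
  simp only [Set.mem_ofPred_eq, eval_map_algebraMap, map_sum, map_mul, map_qFactorial, map_qChoose,
    map_Dmaj, aeval_X]
  exact qFactorial_eq_sum_of_lt_one hq.1 hq.2 n

end Identity

theorem stmt16_general (R : Type*) [CommRing R] (q : R) :
    Dmaj q 0 = 1 ∧
    ∀ n : ℕ, qFactorial q n = ∑ k ∈ range (n + 1), qChoose q n k * Dmaj q k := by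
  refine ⟨by simp [Dmaj, majStat], fun n => ?_⟩
  simpa only [map_sum, map_mul, map_qFactorial, map_qChoose, map_Dmaj, Polynomial.aeval_X]
    using congrArg (Polynomial.aeval (R := ℤ) q) (qFactorial_X_eq_sum n)

theorem stmt16 (K : Type*) [Field K] (q : K) :
    Dmaj q 0 = 1 ∧
    ∀ n : ℕ, 1 ≤ n → ((1 : K) - q ≠ 0) → (∀ m ≤ n, qq q m ≠ 0) →
      qq q n / (1 - q) ^ n
        = ∑ k ∈ Finset.range (n + 1), (qq q n / (qq q k * qq q (n - k))) * Dmaj q k := by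
  refine ⟨(stmt16_general K q).1, fun n _ hq hqq => ?_⟩
  rw [← qFactorial_eq_div hq, (stmt16_general K q).2]
  refine sum_congr rfl fun k hk => ?_
  have hkn := mem_range_succ_iff.1 hk
  rw [qChoose_eq_div hkn (hqq k hkn) (hqq (n - k) (Nat.sub_le n k))]
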